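/- Let n and q be integers with n ≥ 2 and q ≥ 2, let f = gcd(Φ_n(q), n), and let f^i be the largest power of f dividing Φ_n(q). Then Φ*_n(q) = Φ_n(q)/f^i. -/

import Mathlib

/-- `Phi n q` is the `n`-th cyclotomic polynomial evaluated at `q`. -/
noncomputable def Phi (n q : ℕ) : ℕ :=
  ((Polynomial.cyclotomic n ℤ).eval (q : ℤ)).toNat

/-- `PhiStar n q` is the largest divisor of `Phi n q` that is coprime to
`∏_{k=1}^{n-1} (q^k - 1)` (an empty product is `1`). -/
noncomputable def PhiStar (n q : ℕ) : ℕ :=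
  sSup {m : ℕ | m ∣ Phi n q ∧ Nat.Coprime m (∏ k ∈ Finset.Ico 1 n, (q ^ k - 1))}

open Polynomial in
lemma Phi_cast (n q : ℕ) (hq : 2 ≤ q) :
    ((Phi n q : ℕ) : ℤ) = (Polynomial.cyclotomic n ℤ).eval (q : ℤ) := by
  unfold Phi
  apply Int.toNat_of_nonneg
  exact (Polynomial.cyclotomic_pos' n (by exact_mod_cast hq)).le

lemma Phi_pos (n q : ℕ) (hq : 2 ≤ q) : 0 < Phi n q := by
  have h := Polynomial.cyclotomic_pos' (R := ℤ) n (x := (q : ℤ)) (by exact_mod_cast hq)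
  rw [← Phi_cast n q hq] at h
  exact_mod_cast h

lemma Phi_prim (n q p m k : ℕ) (hq : 2 ≤ q) (hp : p.Prime) (hd : p ∣ Phi n q)
    (hn : n = p ^ k * m) (hm : ¬ p ∣ m) : IsPrimitiveRoot (q : ZMod p) m := by
  have : Fact p.Prime := ⟨hp⟩
  have : NeZero (m : ZMod p) := ⟨by rwa [Ne, ZMod.natCast_eq_zero_iff]⟩
  rw [← Polynomial.isRoot_cyclotomic_prime_pow_mul_iff_of_charP (k := k) (p := p), ← hn]
  have h1 : (((Phi n q : ℕ) : ℤ) : ZMod p) = 0 := by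
    rw [Int.cast_natCast, ZMod.natCast_eq_zero_iff]; exact hd
  rw [Phi_cast n q hq] at h1
  rw [Polynomial.IsRoot, ← Polynomial.map_cyclotomic_int n (ZMod p)]
  have := Polynomial.eval_intCast_map (Int.castRingHom (ZMod p)) (Polynomial.cyclotomic n ℤ) (q : ℤ)
  rw [Int.cast_natCast] at this
  rw [this]
  simpa using h1

lemma prim_lt (q p m : ℕ) (hp : p.Prime) (h : IsPrimitiveRoot (q : ZMod p) m)
    (hm : ¬ p ∣ m) : m < p := by
  have : Fact p.Prime := ⟨hp⟩
  have hm0 : m ≠ 0 := by rintro rfl; simp at hm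
  have hq0 : (q : ZMod p) ≠ 0 := by
    intro h0
    have h9 := h.pow_eq_one
    rw [h0, zero_pow hm0] at h9
    exact zero_ne_one h9
  have h1 := ZMod.pow_card_sub_one_eq_one hq0
  have := Nat.le_of_dvd (by have := hp.two_le; omega) (h.dvd_of_pow_eq_one _ h1)
  have := hp.two_le
  omega

lemma dvd_pow_iff (q p k : ℕ) (hq : 2 ≤ q) : p ∣ q ^ k - 1 ↔ (q : ZMod p) ^ k = 1 := by
  rw [← ZMod.natCast_eq_zero_iff, Nat.cast_sub (Nat.one_le_pow _ _ (by omega))]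
  push_cast
  exact sub_eq_zero

lemma Phi_mul_dvd (p m q : ℕ) (hp : p.Prime) (hm : 0 < m) (hq : 2 ≤ q) :
    (q ^ m - 1) * Phi (p * m) q ∣ (q ^ m) ^ p - 1 := by
  have h := Polynomial.X_pow_sub_one_mul_cyclotomic_dvd_X_pow_sub_one_of_dvd ℤ (d := m) (n := p * m)
    (by
      rw [Nat.mem_properDivisors]
      exact ⟨dvd_mul_left _ _, by have := hp.two_le; nlinarith⟩)
  have h2 := Polynomial.eval_dvd (x := (q : ℤ)) h
  simp only [Polynomial.eval_mul, Polynomial.eval_sub, Polynomial.eval_pow, Polynomial.eval_X,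
    Polynomial.eval_one] at h2
  rw [← Phi_cast _ q hq] at h2
  rw [← pow_mul, mul_comm m p]
  zify [Nat.one_le_pow m q (by omega), Nat.one_le_pow (p * m) q (by omega)]
  exact h2

lemma not_sq (n q p : ℕ) (hn : 2 ≤ n) (hq : 2 ≤ q) (hp : p.Prime) (hpn : p ^ 2 ∣ n) :
    ¬ p ^ 2 ∣ Phi n q := by
  intro hd
  have : Fact p.Prime := ⟨hp⟩
  obtain ⟨c, rfl⟩ := hpn
  have hc : 0 < c := by rcases Nat.eq_zero_or_pos c with h | h; · simp [h] at hn
                        exact h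
  have hm : 0 < p * c := Nat.mul_pos hp.pos hc
  have h1 := Phi_mul_dvd p (p * c) q hp hm hq
  rw [← mul_assoc, ← pow_two] at h1
  have hy : (q : ZMod p) ^ (p * c) = 1 := by
    have h3 : p ∣ (q ^ (p * c)) ^ p - 1 :=
      ((dvd_pow_self p two_ne_zero).trans hd).trans ((dvd_mul_left _ _).trans h1)
    rw [← pow_mul, dvd_pow_iff _ _ _ hq, pow_mul, ZMod.pow_card] at h3
    exact h3
  have hy' : p ∣ q ^ (p * c) - 1 := (dvd_pow_iff _ _ _ hq).2 hy
  have hgt : 1 < q ^ (p * c) := Nat.one_lt_pow (by omega) (by omega)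
  have hndvd : ¬ p ∣ q ^ (p * c) := by
    intro h
    have h5 := (Nat.dvd_sub h hy')
    rw [Nat.sub_sub_self hgt.le] at h5
    exact hp.one_lt.ne' (Nat.dvd_one.1 h5)
  rcases hp.eq_two_or_odd' with rfl | hodd
  · generalize hz : q ^ c = z at *
    have e : q ^ (2 * c) = z ^ 2 := by rw [← hz, ← pow_mul, mul_comm]
    rw [e] at h1 hgt hndvd
    have e2 : (z ^ 2) ^ 2 - 1 = (z ^ 2 - 1) * (z ^ 2 + 1) := by
      rw [mul_comm, ← Nat.sq_sub_sq, one_pow]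
    rw [e2] at h1
    have h6 := hd.trans (Nat.dvd_of_mul_dvd_mul_left (by omega) h1)
    have h7 : (z ^ 2 + 1) % 4 = 0 := Nat.mod_eq_zero_of_dvd h6
    have : z % 4 = 0 ∨ z % 4 = 1 ∨ z % 4 = 2 ∨ z % 4 = 3 := by omega
    rcases this with h | h | h | h <;> simp [Nat.add_mod, Nat.pow_mod, h] at h7
  · have h8 := padicValNat.pow_sub_pow (p := p) (x := q ^ (p * c)) (y := 1) (n := p)
      hodd hgt hy' hndvd hp.ne_zero
    rw [one_pow, padicValNat.self hp.one_lt] at h8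
    have hne : (q ^ (p * c)) ^ p - 1 ≠ 0 := by
      have := Nat.one_lt_pow hp.ne_zero hgt
      omega
    have hw := (mul_dvd_mul (pow_padicValNat_dvd (p := p) (n := q ^ (p * c) - 1)) hd).trans h1
    rw [← pow_add] at hw
    have hv := (padicValNat_dvd_iff_le hne).1 hw
    omega

lemma gcd_prime (n q p : ℕ) (hn : 2 ≤ n) (hq : 2 ≤ q) (hp : p.Prime)
    (h1 : p ∣ Phi n q) (h2 : p ∣ n) : Nat.gcd (Phi n q) n = p := by
  obtain ⟨e, he⟩ : ∃ e, Nat.gcd (Phi n q) n = p * e := Nat.dvd_gcd h1 h2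
  by_contra hne
  have he1 : e ≠ 1 := by rintro rfl; simp at he; exact hne he
  obtain ⟨r, hr, hre⟩ := Nat.exists_prime_and_dvd he1
  have hpr : p * r ∣ Nat.gcd (Phi n q) n := he ▸ mul_dvd_mul_left p hre
  have hb : p * r ∣ Phi n q := hpr.trans (Nat.gcd_dvd_left _ _)
  have hbn : p * r ∣ n := hpr.trans (Nat.gcd_dvd_right _ _)
  by_cases hrp : r = p
  · subst hrp
    rw [← pow_two] at hb hbn
    exact not_sq n q r hn hq hr hbn hb
  · have key : ∀ a b : ℕ, a.Prime → b.Prime → b ≠ a → a ∣ Phi n q → b ∣ n → b < a := by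
      intro a b ha hb' hab had hbd
      obtain ⟨k, m, hm, hnm⟩ := Nat.exists_eq_pow_mul_and_not_dvd (n := n) (by omega) a ha.ne_one
      have hlt := prim_lt q a m ha (Phi_prim n q a m k hq ha had hnm hm) hm
      have hbm : b ∣ m := by
        rw [hnm] at hbd
        rcases hb'.dvd_mul.1 hbd with h | h
        · exact absurd ((Nat.prime_dvd_prime_iff_eq hb' ha).1 (hb'.dvd_of_dvd_pow h)) hab
        · exact h
      have hm0 : 0 < m := by
        rcases Nat.eq_zero_or_pos m with h | h
        · simp [h] at hm
        · exact h
      exact (Nat.le_of_dvd hm0 hbm).trans_lt hlt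
    have a1 := key p r hp hr hrp h1 ((dvd_mul_left _ _).trans hbn)
    have a2 := key r p hr hp (Ne.symm hrp) ((dvd_mul_left _ _).trans hb) h2
    omega

lemma dvd_prod_iff (n q p : ℕ) (hn : 2 ≤ n) (hq : 2 ≤ q) (hp : p.Prime) (h1 : p ∣ Phi n q) :
    p ∣ (∏ k ∈ Finset.Ico 1 n, (q ^ k - 1)) ↔ p ∣ n := by
  obtain ⟨k, m, hm, hnm⟩ := Nat.exists_eq_pow_mul_and_not_dvd (n := n) (by omega) p hp.ne_one
  have hprim := Phi_prim n q p m k hq hp h1 hnm hm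
  have hm0 : 0 < m := by
    rcases Nat.eq_zero_or_pos m with h | h
    · simp [h] at hm
    · exact h
  rw [hp.prime.dvd_finsetProd_iff]
  constructor
  · rintro ⟨j, hj, hd⟩
    rw [Finset.mem_Ico] at hj
    rw [dvd_pow_iff _ _ _ hq] at hd
    have hmj := Nat.le_of_dvd (by omega) (hprim.dvd_of_pow_eq_one _ hd)
    rcases Nat.eq_zero_or_pos k with h | h
    · subst h; simp at hnm; omega
    · rw [hnm]; exact (dvd_pow_self p h.ne').trans (dvd_mul_right _ _)
  · intro hpn
    refine ⟨m, Finset.mem_Ico.2 ⟨hm0, ?_⟩, (dvd_pow_iff _ _ _ hq).2 hprim.pow_eq_one⟩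
    refine lt_of_le_of_ne (Nat.le_of_dvd (by omega) (hnm ▸ dvd_mul_left _ _)) ?_
    rintro rfl
    exact hm hpn

/-- Lemma 4(c): with `f = gcd(Φ_n(q), n)` and `P = f^i` the largest power of `f`
dividing `Φ_n(q)`, we have `Φ*_n(q) = Φ_n(q)/f^i`. -/
theorem phiStar_eq_div_gcd_pow (n q f P : ℕ) (hn : 2 ≤ n) (hq : 2 ≤ q)
    (hf : f = Nat.gcd (Phi n q) n)
    (hP : IsGreatest {p : ℕ | (∃ i : ℕ, p = f ^ i) ∧ p ∣ Phi n q} P) :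
    PhiStar n q = Phi n q / P := by
  have hpos := Phi_pos n q hq
  obtain ⟨⟨⟨i, hPi⟩, hPd⟩, hmax⟩ := hP
  have hPpos : 0 < P := Nat.pos_of_dvd_of_pos hPd hpos
  have hfpr : ∀ p : ℕ, p.Prime → p ∣ Phi n q → p ∣ n → f = p := fun p hp h1 h2 =>
    hf.trans (gcd_prime n q p hn hq hp h1 h2)
  unfold PhiStar
  apply IsGreatest.csSup_eq
  refine ⟨⟨Nat.div_dvd_of_dvd hPd, ?_⟩, ?_⟩
  · apply Nat.Coprime.symm
    rw [Nat.coprime_comm]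
    refine Nat.coprime_of_dvd fun r hr h1 h2 => ?_
    have hrd : r ∣ Phi n q := h1.trans (Nat.div_dvd_of_dvd hPd)
    have hrn := (dvd_prod_iff n q r hn hq hr hrd).1 h2
    have hfr := hfpr r hr hrd hrn
    have h3 : P * r ∣ Phi n q := (Nat.dvd_div_iff_mul_dvd hPd).1 h1
    have h4 : P * r ≤ P := hmax ⟨⟨i + 1, by rw [pow_succ, ← hPi, hfr]⟩, h3⟩
    have := hr.two_le
    nlinarith
  · rintro m ⟨hmd, hmc⟩
    apply Nat.le_of_dvd (Nat.div_pos (Nat.le_of_dvd hpos hPd) hPpos)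
    have hc : Nat.Coprime m P := by
      rw [hPi]
      apply Nat.Coprime.pow_right
      refine Nat.coprime_of_dvd fun r hr h1 h2 => ?_
      rw [hf] at h2
      have hrn := h2.trans (Nat.gcd_dvd_right _ _)
      have hr2 := (dvd_prod_iff n q r hn hq hr (h1.trans hmd)).2 hrn
      exact hr.one_lt.ne' (Nat.dvd_one.1 (hmc ▸ Nat.dvd_gcd h1 hr2))
    rw [Nat.dvd_div_iff_mul_dvd hPd]
    exact hc.symm.mul_dvd_of_dvd_of_dvd hPd hmd
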